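/- Let α ∈ (0,2), β > 0, C₀ ∈ ℝ, and λ₀ ∈ (0,1] be such that 2β/(2−α) + C₀ μ^{2−α} > 0 for all μ ∈ (0, λ₀]. Define 𝓕(λ) := ∫_λ^{λ₀} μ^{−(α/2+1)} (2β/(2−α) + C₀ μ^{2−α})^{−1/2} dμ for λ ∈ (0, λ₀]. Then there exists C > 0 such that for all λ ∈ (0, λ₀]: |𝓕(λ) − (2/α) λ^{−α/2} (2β/(2−α))^{−1/2}| ≤ C (λ^{−α/4} + λ^{2 − (3/2)α}). -/

import Mathlib

open Filter intervalIntegral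
open scoped Topology

noncomputable section

theorem inv_sqrt_diff (a b m : ℝ) (hm : 0 < m) (ha : m ≤ a) (hb : m ≤ b) :
    |a ^ (-(1:ℝ)/2) - b ^ (-(1:ℝ)/2)| ≤ |a - b| / (2 * √m ^ 3) := by
  have key : ∀ x : ℝ, 0 < x → x ^ (-(1:ℝ)/2) = (√x)⁻¹ := by
    intro x hx
    rw [neg_div, Real.rpow_neg hx.le, Real.sqrt_eq_rpow]
  have ha0 : 0 < a := hm.trans_le ha
  have hb0 : 0 < b := hm.trans_le hb
  rw [key a ha0, key b hb0]
  have hr : 0 < √m := Real.sqrt_pos.2 hm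
  have hu : √m ≤ √a := Real.sqrt_le_sqrt ha
  have hv : √m ≤ √b := Real.sqrt_le_sqrt hb
  have hab : a - b = (√a - √b) * (√a + √b) := by
    nlinarith [Real.sq_sqrt ha0.le, Real.sq_sqrt hb0.le]
  rw [hab]
  generalize √a = u at *
  generalize √b = v at *
  generalize √m = r at *
  have hu0 : 0 < u := hr.trans_le hu
  have hv0 : 0 < v := hr.trans_le hv
  have h1 : u⁻¹ - v⁻¹ = -(u - v) / (u * v) := by field_simp; ring
  rw [h1, abs_div, abs_neg, abs_of_pos (mul_pos hu0 hv0), abs_mul, abs_of_pos (add_pos hu0 hv0),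
    div_le_div_iff₀ (by positivity) (by positivity), mul_assoc]
  apply mul_le_mul_of_nonneg_left _ (abs_nonneg _)
  calc 2 * r ^ 3 = (r + r) * (r * r) := by ring
    _ ≤ (u + v) * (u * v) := by gcongr

theorem F_expansion (α β C₀ lam₀ : ℝ) (hα0 : 0 < α) (hα2 : α < 2) (hβ : 0 < β)
    (hlam₀0 : 0 < lam₀) (hlam₀1 : lam₀ ≤ 1)
    (hpos : ∀ μ ∈ Set.Ioc (0:ℝ) lam₀, 0 < 2*β/(2-α) + C₀ * μ ^ (2-α)) :
    ∃ C : ℝ, 0 < C ∧ ∀ lam ∈ Set.Ioc (0:ℝ) lam₀,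
      |(∫ μ in lam..lam₀, μ ^ (-(α/2+1)) * (2*β/(2-α) + C₀ * μ ^ (2-α)) ^ (-(1:ℝ)/2))
          - (2/α) * lam ^ (-(α/2)) * (2*β/(2-α)) ^ (-(1:ℝ)/2)|
        ≤ C * (lam ^ (-(α/4)) + lam ^ (2 - (3/2)*α)) := by
  have hp : 0 < 2 - α := by linarith
  have hA : 0 < 2*β/(2-α) := by positivity
  generalize 2*β/(2-α) = A at *
  have hend := hpos lam₀ ⟨hlam₀0, le_rfl⟩
  obtain ⟨m, hm, hmA, hmm⟩ : ∃ m : ℝ, 0 < m ∧ m ≤ A ∧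
      ∀ μ ∈ Set.Ioc (0:ℝ) lam₀, m ≤ A + C₀ * μ ^ (2-α) := by
    refine ⟨min A (A + C₀ * lam₀ ^ (2-α)), lt_min hA hend, min_le_left _ _, ?_⟩
    intro μ hμ
    have h1 : μ ^ (2-α) ≤ lam₀ ^ (2-α) := Real.rpow_le_rpow hμ.1.le hμ.2 hp.le
    have h0 : 0 ≤ μ ^ (2-α) := Real.rpow_nonneg hμ.1.le _
    rcases le_total 0 C₀ with hC | hC
    · exact (min_le_left _ _).trans (by nlinarith)
    · exact (min_le_right _ _).trans (by nlinarith)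
  set K := |C₀| / (2 * √m ^ 3) with hK
  have hK0 : 0 ≤ K := by positivity
  set B := A ^ (-(1:ℝ)/2) with hB
  have hB0 : 0 < B := Real.rpow_pos_of_pos hA _
  set t := min (2 - (3/2)*α) (-(α/4)) with ht
  have ht0 : t < 0 := (min_le_right _ _).trans_lt (by linarith)
  have hM0 : 0 < B * ((2/α) * lam₀ ^ (-(α/2))) := by positivity
  refine ⟨K / (-t) + B * ((2/α) * lam₀ ^ (-(α/2))), ?_, ?_⟩
  · have : 0 ≤ K / (-t) := div_nonneg hK0 (by linarith)
    linarith
  rintro lam ⟨hl0, hl1⟩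
  have hsub : ∀ μ ∈ Set.uIcc lam lam₀, 0 < μ ∧ μ ≤ lam₀ := by
    intro μ hμ
    rw [Set.uIcc_of_le hl1] at hμ
    exact ⟨hl0.trans_le hμ.1, hμ.2⟩
  have h0 : (0:ℝ) ∉ Set.uIcc lam lam₀ := fun h => lt_irrefl _ (hsub 0 h).1
  have cpow : ∀ q : ℝ, ContinuousOn (fun μ : ℝ => μ ^ q) (Set.uIcc lam lam₀) := fun q =>
    continuousOn_id.rpow_const fun μ hμ => Or.inl (hsub μ hμ).1.ne'
  have i1 : IntervalIntegrable (fun μ : ℝ => μ ^ (-(α/2+1)) * (A + C₀ * μ ^ (2-α)) ^ (-(1:ℝ)/2))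
      MeasureTheory.volume lam lam₀ := by
    apply ContinuousOn.intervalIntegrable
    refine (cpow _).mul (ContinuousOn.rpow_const
      (continuousOn_const.add (continuousOn_const.mul (cpow _))) ?_)
    intro μ hμ
    exact Or.inl (hpos μ (hsub μ hμ)).ne'
  have i2 : IntervalIntegrable (fun μ : ℝ => μ ^ (-(α/2+1)) * B)
      MeasureTheory.volume lam lam₀ :=
    ((cpow _).mul continuousOn_const).intervalIntegrable
  have e2 : (∫ μ in lam..lam₀, μ ^ (-(α/2+1)) * B) =
      (2/α) * lam ^ (-(α/2)) * B - B * ((2/α) * lam₀ ^ (-(α/2))) := by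
    rw [intervalIntegral.integral_mul_const, integral_rpow (Or.inr ⟨by linarith, h0⟩)]
    have : -(α/2+1) + 1 = -(α/2) := by ring
    rw [this]
    field_simp
    ring
  have e3 : (∫ μ in lam..lam₀, K * μ ^ (t-1)) = K / (-t) * (lam ^ t - lam₀ ^ t) := by
    rw [intervalIntegral.integral_const_mul, integral_rpow (Or.inr ⟨by linarith, h0⟩)]
    have : t - 1 + 1 = t := by ring
    rw [this]
    have := ht0.ne
    field_simp
    ring
  have hdiff : |(∫ μ in lam..lam₀, (μ ^ (-(α/2+1)) * (A + C₀ * μ ^ (2-α)) ^ (-(1:ℝ)/2)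
      - μ ^ (-(α/2+1)) * B))| ≤ K / (-t) * (lam ^ t - lam₀ ^ t) := by
    rw [← e3, ← Real.norm_eq_abs]
    apply intervalIntegral.norm_integral_le_of_norm_le hl1
    · refine Filter.Eventually.of_forall fun μ hμ => ?_
      have hμ0 : 0 < μ := hl0.trans hμ.1
      have hμ1 : μ ≤ 1 := hμ.2.trans hlam₀1
      rw [← mul_sub, Real.norm_eq_abs, abs_mul, abs_of_pos (Real.rpow_pos_of_pos hμ0 _)]
      have hb := inv_sqrt_diff _ A m hm (hmm μ ⟨hμ0, hμ.2⟩) hmA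
      rw [add_sub_cancel_left, abs_mul, abs_of_pos (Real.rpow_pos_of_pos hμ0 _)] at hb
      calc _ ≤ μ ^ (-(α/2+1)) * (|C₀| * μ ^ (2-α) / (2 * √m ^ 3)) := by gcongr
        _ = K * (μ ^ (-(α/2+1)) * μ ^ (2-α)) := by rw [hK]; ring
        _ = K * μ ^ ((2 - (3/2)*α) - 1) := by
          rw [← Real.rpow_add hμ0]; congr 2; ring
        _ ≤ K * μ ^ (t-1) := by
          apply mul_le_mul_of_nonneg_left _ hK0
          apply Real.rpow_le_rpow_of_exponent_ge hμ0 hμ1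
          have := min_le_left (2 - (3/2)*α) (-(α/4))
          linarith
    · exact (continuousOn_const.mul (cpow _)).intervalIntegrable
  rw [intervalIntegral.integral_sub i1 i2, e2] at hdiff
  have hX : 1 ≤ lam ^ (-(α/4)) :=
    Real.one_le_rpow_of_pos_of_le_one_of_nonpos hl0 (hl1.trans hlam₀1) (by linarith)
  have hY : 0 < lam ^ (2 - (3/2)*α) := Real.rpow_pos_of_pos hl0 _
  have hZ : lam ^ t ≤ lam ^ (-(α/4)) + lam ^ (2 - (3/2)*α) := by
    rcases min_choice (2 - (3/2)*α) (-(α/4)) with h | h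
    · rw [ht, h]; linarith
    · rw [ht, h]; linarith
  have hZ0 : 0 < lam₀ ^ t := Real.rpow_pos_of_pos hlam₀0 _
  have hKt : 0 ≤ K / (-t) := div_nonneg hK0 (by linarith)
  have f1 : K / (-t) * (lam ^ t - lam₀ ^ t) ≤
      K / (-t) * (lam ^ (-(α/4)) + lam ^ (2 - (3/2)*α)) :=
    mul_le_mul_of_nonneg_left (by linarith) hKt
  have f2 : B * ((2/α) * lam₀ ^ (-(α/2))) ≤
      B * ((2/α) * lam₀ ^ (-(α/2))) * (lam ^ (-(α/4)) + lam ^ (2 - (3/2)*α)) :=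
    le_mul_of_one_le_right hM0.le (by linarith)
  rw [add_mul]
  rw [abs_le] at hdiff ⊢
  constructor <;> linarith [hdiff.1, hdiff.2]
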